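/- arXiv:2405.04703 — 2 statements merged into one kernel-verified Lean document; each statement's English description precedes it below -/
import Mathlib

section
/- Let (a_1,…,a_N) be a finite sequence of positive integers with N odd, a_1=1, and a_k=a_{N+1−k} for all k, and let G=AT(a_1,…,a_N) be the associated symmetrical antitree, of diameter L=N−1. Then G is Bonnet-Myers sharp if and only if every radial edge x∼y of G satisfies κ_LLY(x,y)=2/L. -/
open scoped Classical
open Finset

noncomputable section

/-- The degree of a vertex `x` in the graph `G`. -/
def deg {V : Type*} [Fintype V] (G : SimpleGraph V) (x : V) : ℕ :=
  (Finset.univ.filter (fun y => G.Adj x y)).card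

/-- The diameter of `G`: the maximum of the combinatorial distance over all pairs of vertices. -/
def diam {V : Type*} [Fintype V] (G : SimpleGraph V) : ℕ :=
  Finset.univ.sup (fun xy : V × V => G.dist xy.1 xy.2)

/-- The probability measure `μ_x^p` of the lazy simple random walk at `x` with idleness `p`. -/
def mu {V : Type*} [Fintype V] (G : SimpleGraph V) (p : ℝ) (x : V) : V → ℝ :=
  fun z => if z = x then p else if G.Adj x z then (1 - p) / (deg G x : ℝ) else 0

/-- The Wasserstein distance `W₁(μ₁, μ₂)` with respect to the combinatorial distance of `G`:
the infimum of the total transport cost over all transport plans from `μ₁` to `μ₂`. -/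
def W1 {V : Type*} [Fintype V] (G : SimpleGraph V) (μ₁ μ₂ : V → ℝ) : ℝ :=
  sInf {c : ℝ | ∃ π : V → V → ℝ,
    (∀ x y, 0 ≤ π x y ∧ π x y ≤ 1) ∧
    (∀ x, ∑ y, π x y = μ₁ x) ∧
    (∀ y, ∑ x, π x y = μ₂ y) ∧
    c = ∑ x, ∑ y, (G.dist x y : ℝ) * π x y}

/-- The `p`-Ollivier-Ricci curvature `κ_p(x,y) = 1 - W₁(μ_x^p, μ_y^p)`. -/
def kappa {V : Type*} [Fintype V] (G : SimpleGraph V) (p : ℝ) (x y : V) : ℝ :=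
  1 - W1 G (mu G p x) (mu G p y)

/-- The Lin-Lu-Yau curvature `κ_LLY(x,y) = lim_{p→1} κ_p(x,y)/(1-p)`. -/
def kappaLLY {V : Type*} [Fintype V] (G : SimpleGraph V) (x y : V) : ℝ :=
  Filter.limUnder (nhdsWithin 1 (Set.Iio 1)) (fun p => kappa G p x y / (1 - p))

/-- `G` is Bonnet-Myers sharp if the infimum of `κ_LLY` over the edges equals `2/diam(G)`. -/
def BMSharp {V : Type*} [Fintype V] (G : SimpleGraph V) : Prop :=
  sInf {r : ℝ | ∃ x y, G.Adj x y ∧ r = kappaLLY G x y} = 2 / (diam G : ℝ)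

/-- `G` is obtained from the complete graph on its vertex set by deleting a matching
(a set of pairwise disjoint edges, encoded as a symmetric irreflexive relation in which
every vertex has at most one partner). -/
def IsMatchingDeletionOfComplete {V : Type*} (G : SimpleGraph V) : Prop :=
  ∃ M : V → V → Prop, Symmetric M ∧ (∀ x, ¬ M x x) ∧
    (∀ x y z, M x y → M x z → y = z) ∧
    (∀ x y, G.Adj x y ↔ x ≠ y ∧ ¬ M x y)

/-- The graph `G(a,b)` on `2a+b` vertices `u_1, …, u_{2a}, v_1, …, v_b` (encoded as
`Fin (2a+b)`, with `u_i` the index `i-1` and `v_j` the index `2a+j-1`), in which two distinct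
vertices are adjacent unless they form a pair `{u_{2i-1}, u_{2i}}`, i.e. `G(a,b)` is the
complete graph `K_{2a+b}` with a matching of size `a` deleted. -/
def Gab (a b : ℕ) : SimpleGraph (Fin (2*a+b)) where
  Adj x y := x ≠ y ∧ ¬((x : ℕ) < 2*a ∧ (y : ℕ) < 2*a ∧ (x : ℕ)/2 = (y : ℕ)/2)
  symm := by
    constructor
    intro x y h
    exact ⟨h.1.symm, fun hc => h.2 ⟨hc.2.1, hc.1, hc.2.2.symm⟩⟩
  loopless := by constructor; intro x h; exact h.1 rfl

/-- The antitree `AT(a_1, …, a_N)` on the disjoint union of sets `V_1, …, V_N` with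
`|V_k| = a_k` (0-indexed here: `V_k` is `Fin (a k)` for `k : Fin N`): two distinct vertices
are adjacent iff they lie in the same set or in consecutive sets. -/
def antitree (N : ℕ) (a : Fin N → ℕ) : SimpleGraph (Σ k : Fin N, Fin (a k)) where
  Adj x y := x ≠ y ∧
    ((x.1 : ℕ) = (y.1 : ℕ) ∨ (x.1 : ℕ) + 1 = (y.1 : ℕ) ∨ (y.1 : ℕ) + 1 = (x.1 : ℕ))
  symm := by
    constructor
    intro x y h
    refine ⟨h.1.symm, ?_⟩
    rcases h.2 with h2 | h2 | h2
    · exact Or.inl h2.symm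
    · exact Or.inr (Or.inr h2)
    · exact Or.inr (Or.inl h2)
  loopless := by constructor; intro x h; exact h.1 rfl

def avg {V : Type*} [Fintype V] (G : SimpleGraph V) (f : V → ℝ) (x : V) : ℝ :=
  (∑ z ∈ Finset.univ.filter (fun y => G.Adj x y), f z) / (deg G x : ℝ)

lemma deg_pos {V : Type*} [Fintype V] {G : SimpleGraph V} {x y : V} (h : G.Adj x y) :
    0 < deg G x :=
  Finset.card_pos.mpr ⟨y, by simp [h]⟩

lemma sum_mu {V : Type*} [Fintype V] (G : SimpleGraph V) (f : V → ℝ) (p : ℝ) (x : V) :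
    ∑ z, f z * mu G p x z = p * f x + (1 - p) * avg G f x := by
  have h : ∀ z, f z * mu G p x z = (if z = x then p * f z else 0) +
      (if G.Adj x z then f z * ((1 - p) / (deg G x : ℝ)) else 0) := by
    intro z
    unfold mu
    by_cases hz : z = x
    · subst hz; simp [mul_comm]
    · simp only [hz, if_false]
      split_ifs <;> simp
  rw [Finset.sum_congr rfl (fun z _ => h z), Finset.sum_add_distrib, ← Finset.sum_filter (fun z => G.Adj x z),
    ← Finset.sum_mul]
  simp only [Finset.sum_ite_eq', Finset.mem_univ, if_true, avg]
  ring

lemma sum_mu_one {V : Type*} [Fintype V] {G : SimpleGraph V} (p : ℝ) {x y : V} (h : G.Adj x y) :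
    ∑ z, mu G p x z = 1 := by
  have := sum_mu G (fun _ => 1) p x
  have hd : (deg G x : ℝ) ≠ 0 := by exact_mod_cast (deg_pos h).ne'
  have ha : avg G (fun _ => 1) x = 1 := by
    unfold avg
    rw [Finset.sum_const, nsmul_eq_mul, mul_one]
    exact div_self hd
  rw [ha] at this
  simp only [one_mul] at this
  rw [this]; ring

lemma mu_nonneg {V : Type*} [Fintype V] (G : SimpleGraph V) {p : ℝ} (h0 : 0 ≤ p) (h1 : p ≤ 1)
    (x z : V) : 0 ≤ mu G p x z := by
  unfold mu
  have : 0 ≤ (1 - p) / (deg G x : ℝ) := div_nonneg (by linarith) (by positivity)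
  split_ifs <;> first | assumption | exact le_rfl

lemma mu_le_one {V : Type*} [Fintype V] {G : SimpleGraph V} {p : ℝ} (h0 : 0 ≤ p) (h1 : p ≤ 1)
    {x y : V} (h : G.Adj x y) (z : V) : mu G p x z ≤ 1 := by
  rw [← sum_mu_one p h]
  exact Finset.single_le_sum (f := mu G p x) (fun i _ => mu_nonneg G h0 h1 x i) (Finset.mem_univ z)

def costs {V : Type*} [Fintype V] (G : SimpleGraph V) (μ₁ μ₂ : V → ℝ) : Set ℝ :=
  {c : ℝ | ∃ π : V → V → ℝ,
    (∀ x y, 0 ≤ π x y ∧ π x y ≤ 1) ∧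
    (∀ x, ∑ y, π x y = μ₁ x) ∧
    (∀ y, ∑ x, π x y = μ₂ y) ∧
    c = ∑ x, ∑ y, (G.dist x y : ℝ) * π x y}

lemma W1_eq {V : Type*} [Fintype V] (G : SimpleGraph V) (μ₁ μ₂ : V → ℝ) :
    W1 G μ₁ μ₂ = sInf (costs G μ₁ μ₂) := rfl

lemma costs_bdd {V : Type*} [Fintype V] (G : SimpleGraph V) (μ₁ μ₂ : V → ℝ) :
    BddBelow (costs G μ₁ μ₂) := by
  refine ⟨0, ?_⟩
  rintro c ⟨π, h, -, -, rfl⟩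
  exact Finset.sum_nonneg fun x _ => Finset.sum_nonneg fun y _ =>
    mul_nonneg (Nat.cast_nonneg _) (h x y).1

lemma costs_nonempty {V : Type*} [Fintype V] {G : SimpleGraph V} {p : ℝ} (h0 : 0 ≤ p) (h1 : p ≤ 1)
    {x y : V} (h : G.Adj x y) : (costs G (mu G p x) (mu G p y)).Nonempty := by
  refine ⟨_, fun u v => mu G p x u * mu G p y v, ?_, ?_, ?_, rfl⟩
  · intro u v
    exact ⟨mul_nonneg (mu_nonneg G h0 h1 _ _) (mu_nonneg G h0 h1 _ _),
      mul_le_one₀ (mu_le_one h0 h1 h _) (mu_nonneg G h0 h1 _ _) (mu_le_one h0 h1 h.symm _)⟩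
  · intro u
    rw [← Finset.mul_sum, sum_mu_one p h.symm, mul_one]
  · intro u
    rw [← Finset.sum_mul, sum_mu_one p h, one_mul]

lemma costs_swap {V : Type*} [Fintype V] (G : SimpleGraph V) (μ₁ μ₂ : V → ℝ) :
    costs G μ₁ μ₂ ⊆ costs G μ₂ μ₁ := by
  rintro c ⟨π, h, ha, hb, rfl⟩
  refine ⟨fun u v => π v u, fun u v => h v u, hb, ha, ?_⟩
  rw [Finset.sum_comm]
  simp only [SimpleGraph.dist_comm]

lemma kappaLLY_symm {V : Type*} [Fintype V] (G : SimpleGraph V) (x y : V) :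
    kappaLLY G x y = kappaLLY G y x := by
  unfold kappaLLY kappa
  simp only [W1_eq]
  have : ∀ p, costs G (mu G p x) (mu G p y) = costs G (mu G p y) (mu G p x) :=
    fun p => Set.Subset.antisymm (costs_swap _ _ _) (costs_swap _ _ _)
  simp only [this]

/-- Kantorovich lower bound. -/
lemma kappa_le {V : Type*} [Fintype V] {G : SimpleGraph V} {p : ℝ} (h0 : 0 ≤ p) (h1 : p ≤ 1)
    {x y : V} (h : G.Adj x y) (f : V → ℝ) (hf : ∀ u v, f v - f u ≤ G.dist u v)
    (hxy : f y - f x = 1) :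
    kappa G p x y ≤ (1 - p) * (1 + avg G f x - avg G f y) := by
  have hW : ∑ z, f z * mu G p y z - ∑ z, f z * mu G p x z ≤ W1 G (mu G p x) (mu G p y) := by
    rw [W1_eq]
    apply le_csInf (costs_nonempty h0 h1 h)
    rintro c ⟨π, hπ, ha, hb, rfl⟩
    have e1 : ∑ z, f z * mu G p y z = ∑ u, ∑ v, f v * π u v := by
      rw [Finset.sum_comm]
      refine Finset.sum_congr rfl fun v _ => ?_
      rw [← hb v, Finset.mul_sum]
    have e2 : ∑ z, f z * mu G p x z = ∑ u, ∑ v, f u * π u v := by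
      refine Finset.sum_congr rfl fun v _ => ?_
      rw [← ha v, Finset.mul_sum]
    rw [e1, e2, ← Finset.sum_sub_distrib]
    refine Finset.sum_le_sum fun u _ => ?_
    rw [← Finset.sum_sub_distrib]
    refine Finset.sum_le_sum fun v _ => ?_
    rw [← sub_mul]
    exact mul_le_mul_of_nonneg_right (hf u v) (hπ u v).1
  rw [sum_mu, sum_mu] at hW
  unfold kappa
  have : f y = f x + 1 := by linarith
  rw [this] at hW
  nlinarith

lemma mu_comb {V : Type*} [Fintype V] (G : SimpleGraph V) {p q : ℝ} (hq : q < 1) (x z : V) :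
    mu G p x z = (1 - p) / (1 - q) * mu G q x z +
      (1 - (1 - p) / (1 - q)) * (if z = x then 1 else 0) := by
  have : 1 - q ≠ 0 := by linarith
  unfold mu
  split_ifs
  · field_simp; ring
  · rw [mul_zero, add_zero, div_mul_div_comm, mul_comm (1 - q), mul_div_mul_right _ _ this]
  · ring

lemma kappa_mono {V : Type*} [Fintype V] {G : SimpleGraph V} {x y : V} (h : G.Adj x y) :
    MonotoneOn (fun p => kappa G p x y / (1 - p)) (Set.Ioo 0 1) := by
  intro q hq p hp hqp
  have hq1 : 0 < 1 - q := by linarith [hq.2]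
  have hp1 : 0 < 1 - p := by linarith [hp.2]
  set t := (1 - p) / (1 - q) with ht
  have ht0 : 0 < t := div_pos hp1 hq1
  have ht1 : t ≤ 1 := by rw [ht, div_le_one hq1]; linarith
  have key : W1 G (mu G p x) (mu G p y) ≤ t * W1 G (mu G q x) (mu G q y) + (1 - t) := by
    have : (W1 G (mu G p x) (mu G p y) - (1 - t)) / t ≤ W1 G (mu G q x) (mu G q y) := by
      rw [W1_eq (μ₁ := mu G q x)]
      apply le_csInf (costs_nonempty hq.1.le hq.2.le h)
      rintro c ⟨π, hπ, ha, hb, rfl⟩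
      rw [div_le_iff₀ ht0, sub_le_iff_le_add]
      apply csInf_le (costs_bdd _ _ _)
      refine ⟨fun u v => t * π u v + (1 - t) * (if u = x then (if v = y then 1 else 0) else 0),
        ?_, ?_, ?_, ?_⟩
      · intro u v
        obtain ⟨h1, h2⟩ := hπ u v
        have h3 : 0 ≤ t * π u v := mul_nonneg ht0.le h1
        have h4 : t * π u v ≤ t := mul_le_of_le_one_right ht0.le h2
        constructor <;> dsimp only <;> split_ifs <;> nlinarith
      · intro u
        rw [Finset.sum_add_distrib, ← Finset.mul_sum, ← Finset.mul_sum, ha, mu_comb G (p := p) hq.2]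
        congr 2
        split_ifs <;> simp
      · intro v
        rw [Finset.sum_add_distrib, ← Finset.mul_sum, ← Finset.mul_sum, hb, mu_comb G (p := p) hq.2]
        congr 2
        simp
      · simp only [mul_add, Finset.sum_add_distrib]
        congr 1
        · rw [Finset.sum_mul]
          refine Finset.sum_congr rfl fun u _ => ?_
          rw [Finset.sum_mul]
          refine Finset.sum_congr rfl fun v _ => ?_
          ring
        · have : G.dist x y = 1 := SimpleGraph.dist_eq_one_iff_adj.mpr h
          rw [Finset.sum_eq_single x]
          · rw [Finset.sum_eq_single y]
            · simp [this]
            · intro b _ hb; simp [hb]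
            · simp
          · intro b _ hb; simp [hb]
          · simp
    rw [div_le_iff₀ ht0] at this
    linarith
  show kappa G q x y / (1 - q) ≤ kappa G p x y / (1 - p)
  have e : kappa G q x y / (1 - q) = t * kappa G q x y / (1 - p) := by
    rw [ht]; field_simp
  rw [e]
  apply div_le_div_of_nonneg_right _ hp1.le
  unfold kappa
  linarith

lemma ratio_le {V : Type*} [Fintype V] {G : SimpleGraph V}
    {x y : V} (h : G.Adj x y) (f : V → ℝ) (hf : ∀ u v, f v - f u ≤ G.dist u v)
    (hxy : f y - f x = 1) {p : ℝ} (hp : p ∈ Set.Ioo (0:ℝ) 1) :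
    kappa G p x y / (1 - p) ≤ 1 + avg G f x - avg G f y := by
  rw [div_le_iff₀ (by linarith [hp.2]), mul_comm]
  exact kappa_le hp.1.le hp.2.le h f hf hxy

lemma kappaLLY_eq {V : Type*} [Fintype V] {G : SimpleGraph V} (hG : G.Connected)
    {x y : V} (h : G.Adj x y) :
    BddAbove ((fun p => kappa G p x y / (1 - p)) '' Set.Ioo 0 1) ∧
    kappaLLY G x y = sSup ((fun p => kappa G p x y / (1 - p)) '' Set.Ioo 0 1) := by
  have hb : BddAbove ((fun p => kappa G p x y / (1 - p)) '' Set.Ioo 0 1) := by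
    refine ⟨1 + avg G (fun z => (G.dist x z : ℝ)) x - avg G (fun z => (G.dist x z : ℝ)) y, ?_⟩
    · rintro _ ⟨p, hp, rfl⟩
      refine ratio_le h (fun z => (G.dist x z : ℝ)) ?_ ?_ hp
      · intro u v
        have := hG.dist_triangle (u := x) (v := u) (w := v)
        have : (G.dist x v : ℝ) ≤ G.dist x u + G.dist u v := by exact_mod_cast this
        linarith
      · simp [SimpleGraph.dist_eq_one_iff_adj.mpr h]
  refine ⟨hb, ?_⟩
  exact (MonotoneOn.tendsto_nhdsWithin_Ioo_left ⟨1/2, by norm_num, by norm_num⟩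
    (kappa_mono h) hb).limUnder_eq

lemma kappaLLY_le {V : Type*} [Fintype V] {G : SimpleGraph V} (hG : G.Connected)
    {x y : V} (h : G.Adj x y) (f : V → ℝ) (hf : ∀ u v, f v - f u ≤ G.dist u v)
    (hxy : f y - f x = 1) : kappaLLY G x y ≤ 1 + avg G f x - avg G f y := by
  rw [(kappaLLY_eq hG h).2]
  apply csSup_le
  · exact ⟨_, 1/2, ⟨by norm_num, by norm_num⟩, rfl⟩
  · rintro _ ⟨p, hp, rfl⟩
    exact ratio_le h f hf hxy hp

lemma le_kappaLLY_twin {V : Type*} [Fintype V] {G : SimpleGraph V} (hG : G.Connected)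
    {x y : V} (h : G.Adj x y) (htw : ∀ z, z ≠ x → z ≠ y → (G.Adj x z ↔ G.Adj y z)) :
    1 ≤ kappaLLY G x y := by
  have hd : deg G x = deg G y := by
    unfold deg
    refine Finset.card_bij (fun z _ => Equiv.swap x y z) ?_ ?_ ?_
    · intro z hz
      simp only [Finset.mem_filter, Finset.mem_univ, true_and] at hz ⊢
      by_cases hzy : z = y
      · subst hzy; simpa using h.symm
      · have hzx : z ≠ x := hz.ne'
        rw [Equiv.swap_apply_of_ne_of_ne hzx hzy]
        exact (htw z hzx hzy).1 hz
    · intro z _ w _ e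
      exact (Equiv.swap x y).injective e
    · intro z hz
      simp only [Finset.mem_filter, Finset.mem_univ, true_and] at hz
      refine ⟨Equiv.swap x y z, ?_, by simp⟩
      simp only [Finset.mem_filter, Finset.mem_univ, true_and]
      by_cases hzx : z = x
      · subst hzx; simpa using h
      · have hzy : z ≠ y := hz.ne'
        rw [Equiv.swap_apply_of_ne_of_ne hzx hzy]
        exact (htw z hzx hzy).2 hz
  have hdp : (0:ℝ) < deg G x := by exact_mod_cast deg_pos h
  set q : ℝ := 1 / (deg G x + 1) with hq
  have hq0 : 0 < q := by positivity
  have hq1 : q < 1 := by rw [hq, div_lt_one (by positivity)]; linarith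
  have hmq : (1 - q) / (deg G x : ℝ) = q := by
    rw [hq]; field_simp; ring
  have hmu : mu G q x = mu G q y := by
    funext z
    unfold mu
    rw [← hd, hmq]
    by_cases hzx : z = x
    · subst hzx; simp [h.symm]
    · by_cases hzy : z = y
      · subst hzy; simp [h]
      · simp [hzx, hzy, htw z hzx hzy]
  have hW : W1 G (mu G q x) (mu G q y) ≤ 0 := by
    rw [W1_eq]
    apply csInf_le (costs_bdd _ _ _)
    refine ⟨fun u v => if u = v then mu G q x u else 0, ?_, ?_, ?_, ?_⟩
    · intro u v
      have := mu_nonneg G hq0.le hq1.le x u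
      have := mu_le_one hq0.le hq1.le h u
      dsimp only
      split_ifs <;> constructor <;> first | assumption | norm_num
    · intro u; simp
    · intro u; simp [hmu]
    · symm
      apply Finset.sum_eq_zero
      intro u _
      apply Finset.sum_eq_zero
      intro v _
      dsimp only
      split_ifs with e
      · subst e; simp
      · simp
  obtain ⟨hb, e⟩ := kappaLLY_eq hG h
  rw [e]
  refine le_trans ?_ (le_csSup hb ⟨q, ⟨hq0, hq1⟩, rfl⟩)
  show 1 ≤ kappa G q x y / (1 - q)
  rw [le_div_iff₀ (by linarith)]
  unfold kappa
  linarith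

section AT

variable {N : ℕ} {a : Fin N → ℕ}

def lev (z : Σ k : Fin N, Fin (a k)) : ℝ := ((z.1 : ℕ) : ℝ)

lemma at_up (hpos : ∀ k, 0 < a k) (n : ℕ) : ∀ x y : Σ k : Fin N, Fin (a k),
    (x.1 : ℕ) + (n + 1) = y.1 → ∃ p : (antitree N a).Walk x y, p.length = n + 1 := by
  induction n with
  | zero =>
    intro x y h
    have hadj : (antitree N a).Adj x y := ⟨by rintro rfl; omega, Or.inr (Or.inl h)⟩
    exact ⟨hadj.toWalk, by simp⟩
  | succ n ih =>
    intro x y h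
    have hlt : (x.1 : ℕ) + 1 < N := by have := y.1.2; omega
    let z : Σ k : Fin N, Fin (a k) := ⟨⟨x.1 + 1, hlt⟩, ⟨0, hpos _⟩⟩
    have hadj : (antitree N a).Adj x z :=
      ⟨by intro e; have : (x.1 : ℕ) = x.1 + 1 := congrArg (fun w => (w.1 : ℕ)) e; omega,
        Or.inr (Or.inl rfl)⟩
    obtain ⟨p, hp⟩ := ih z y (by show (x.1 : ℕ) + 1 + (n + 1) = y.1; omega)
    exact ⟨SimpleGraph.Walk.cons hadj p, by simp [hp]⟩

lemma at_dist_le' (hpos : ∀ k, 0 < a k) (hN : 2 ≤ N) (x y : Σ k : Fin N, Fin (a k))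
    (h : (x.1 : ℕ) ≤ y.1) : ∃ p : (antitree N a).Walk x y, p.length ≤ N - 1 := by
  rcases h.eq_or_lt with e | l
  · by_cases hxy : x = y
    · subst hxy; exact ⟨SimpleGraph.Walk.nil, by simp⟩
    · have hadj : (antitree N a).Adj x y := ⟨hxy, Or.inl e⟩
      exact ⟨hadj.toWalk, by simp; omega⟩
  · obtain ⟨p, hp⟩ := at_up hpos ((y.1 : ℕ) - x.1 - 1) x y (by omega)
    exact ⟨p, by have := y.1.2; omega⟩

lemma at_dist_le (hpos : ∀ k, 0 < a k) (hN : 2 ≤ N) (x y : Σ k : Fin N, Fin (a k)) :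
    ∃ p : (antitree N a).Walk x y, p.length ≤ N - 1 := by
  rcases le_total (x.1 : ℕ) y.1 with h | h
  · exact at_dist_le' hpos hN x y h
  · obtain ⟨p, hp⟩ := at_dist_le' hpos hN y x h
    exact ⟨p.reverse, by simpa using hp⟩

lemma at_connected (hpos : ∀ k, 0 < a k) (hN : 2 ≤ N) : (antitree N a).Connected := by
  haveI : Nonempty (Σ k : Fin N, Fin (a k)) := ⟨⟨⟨0, by omega⟩, ⟨0, hpos _⟩⟩⟩
  refine ⟨fun x y => ?_⟩
  obtain ⟨p, -⟩ := at_dist_le hpos hN x y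
  exact ⟨p⟩

lemma at_lev (hpos : ∀ k, 0 < a k) (hN : 2 ≤ N) (x y : Σ k : Fin N, Fin (a k)) :
    (y.1 : ℕ) ≤ x.1 + (antitree N a).dist x y := by
  obtain ⟨p, hp⟩ := (at_connected hpos hN).exists_walk_length_eq_dist x y
  rw [← hp]
  clear hp
  induction p with
  | nil => simp
  | cons h p ih =>
    have := h.2
    rw [SimpleGraph.Walk.length_cons]
    omega

lemma at_diam (hpos : ∀ k, 0 < a k) (hN : 2 ≤ N) : diam (antitree N a) = N - 1 := by
  apply le_antisymm
  · apply Finset.sup_le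
    rintro ⟨x, y⟩ -
    obtain ⟨p, hp⟩ := at_dist_le hpos hN x y
    exact (SimpleGraph.dist_le p).trans hp
  · let x : Σ k : Fin N, Fin (a k) := ⟨⟨0, by omega⟩, ⟨0, hpos _⟩⟩
    let y : Σ k : Fin N, Fin (a k) := ⟨⟨N - 1, by omega⟩, ⟨0, hpos _⟩⟩
    have h := at_lev hpos hN x y
    have h' : N - 1 ≤ 0 + (antitree N a).dist x y := h
    rw [zero_add] at h'
    exact h'.trans (Finset.le_sup (f := fun xy : (Σ k : Fin N, Fin (a k)) × _ =>
      (antitree N a).dist xy.1 xy.2) (Finset.mem_univ (x, y)))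

lemma at_kappa_le (hpos : ∀ k, 0 < a k) (hN : 2 ≤ N) (x y : Σ k : Fin N, Fin (a k))
    (h : (x.1 : ℕ) + 1 = y.1) : kappaLLY (antitree N a) x y ≤
      (avg (antitree N a) lev x - lev x) - (avg (antitree N a) lev y - lev y) := by
  have hadj : (antitree N a).Adj x y := ⟨by rintro rfl; omega, Or.inr (Or.inl h)⟩
  have hl : lev y - lev x = 1 := by
    unfold lev; rw [← h]; push_cast; ring
  have := kappaLLY_le (at_connected hpos hN) hadj lev (by
    intro u v
    have := at_lev hpos hN u v
    have : ((v.1 : ℕ) : ℝ) ≤ (u.1 : ℕ) + (antitree N a).dist u v := by exact_mod_cast this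
    unfold lev
    linarith) hl
  linarith

lemma avg_const {V : Type*} [Fintype V] {G : SimpleGraph V} {x y : V} (h : G.Adj x y)
    (f : V → ℝ) (c : ℝ) (hc : ∀ z, G.Adj x z → f z = c) : avg G f x = c := by
  have hd : (deg G x : ℝ) ≠ 0 := by exact_mod_cast (deg_pos h).ne'
  unfold avg
  rw [Finset.sum_congr rfl (fun z hz => hc z (by simpa using hz)), Finset.sum_const, nsmul_eq_mul]
  exact mul_div_cancel_left₀ _ hd

lemma at_eq {k : Fin N} (hk : a k = 1) (x y : Σ k : Fin N, Fin (a k)) (hx : x.1 = k)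
    (hy : y.1 = k) : x = y := by
  obtain ⟨i, u⟩ := x
  obtain ⟨j, v⟩ := y
  dsimp at hx hy
  subst hx
  subst hy
  congr 1
  apply Fin.ext
  have := u.2
  have := v.2
  omega

lemma at_main (hpos : ∀ k, 0 < a k) (hN : 2 ≤ N) (h1 : a ⟨0, by omega⟩ = 1)
    (h2 : a ⟨N - 1, by omega⟩ = 1)
    (hge : ∀ x y, (antitree N a).Adj x y → 2 / ((N : ℝ) - 1) ≤ kappaLLY (antitree N a) x y)
    (x y : Σ k : Fin N, Fin (a k)) (h : (x.1 : ℕ) + 1 = y.1) :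
    kappaLLY (antitree N a) x y = 2 / ((N : ℝ) - 1) := by
  have hadj : ∀ x y : Σ k : Fin N, Fin (a k), (x.1 : ℕ) + 1 = y.1 → (antitree N a).Adj x y :=
    fun x y h => ⟨by rintro rfl; omega, Or.inr (Or.inl h)⟩
  refine le_antisymm ?_ (hge x y (hadj x y h))
  obtain ⟨v, hv, hvx, hvy⟩ : ∃ v : ℕ → Σ k : Fin N, Fin (a k),
      (∀ k < N, ((v k).1 : ℕ) = k) ∧ v x.1 = x ∧ v y.1 = y := by
    refine ⟨fun k => if k = x.1 then x else if k = y.1 then y else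
      if hk : k < N then ⟨⟨k, hk⟩, ⟨0, hpos _⟩⟩ else x, ?_, ?_, ?_⟩
    · intro k hk
      dsimp only
      split_ifs with e1 e2
      · exact e1.symm
      · exact e2.symm
      · rfl
    · simp
    · dsimp only
      rw [if_neg (by omega), if_pos rfl]
  let D : ℕ → ℝ := fun k => avg (antitree N a) lev (v k) - lev (v k)
  have hlow : ∀ k ∈ Finset.range (N - 1), 2 / ((N : ℝ) - 1) ≤ D k - D (k + 1) := by
    intro k hk
    rw [Finset.mem_range] at hk
    have e : ((v k).1 : ℕ) + 1 = (v (k + 1)).1 := by rw [hv k (by omega), hv (k + 1) (by omega)]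
    exact (hge _ _ (hadj _ _ e)).trans (at_kappa_le hpos hN _ _ e)
  have hN1 : ((N - 1 : ℕ) : ℝ) = (N : ℝ) - 1 := by
    rw [Nat.cast_sub (by omega)]; simp
  have hNr : (N : ℝ) - 1 ≠ 0 := by
    rw [← hN1]; exact_mod_cast (by omega : N - 1 ≠ 0)
  have hD0 : D 0 = 1 := by
    have e0 := hv 0 (by omega)
    have : avg (antitree N a) lev (v 0) = 1 := by
      apply avg_const (hadj (v 0) (v 1) (by rw [e0, hv 1 (by omega)]))
      intro z hz
      have hz0 : (z.1 : ℕ) ≠ 0 := by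
        intro hz0
        exact hz.1 (at_eq h1 _ _ (Fin.ext e0) (Fin.ext hz0))
      have := hz.2
      have : (z.1 : ℕ) = 1 := by omega
      simp [lev, this]
    simp only [D, this, lev, e0]; simp
  have hDN : D (N - 1) = -1 := by
    have e0 := hv (N - 1) (by omega)
    have : avg (antitree N a) lev (v (N - 1)) = ((N - 2 : ℕ) : ℝ) := by
      apply avg_const (hadj (v (N - 2)) (v (N - 1)) (by
        rw [e0, hv (N - 2) (by omega)]; omega)).symm
      intro z hz
      have hz0 : (z.1 : ℕ) ≠ N - 1 := by
        intro hz0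
        exact hz.1 (at_eq h2 _ _ (Fin.ext e0) (Fin.ext hz0))
      have := hz.2
      have := z.1.2
      have : (z.1 : ℕ) = N - 2 := by omega
      simp [lev, this]
    simp only [D, this, lev, e0]
    rw [hN1, Nat.cast_sub hN]; push_cast; ring
  have hsum : ∑ k ∈ Finset.range (N - 1), 2 / ((N : ℝ) - 1) =
      ∑ k ∈ Finset.range (N - 1), (D k - D (k + 1)) := by
    rw [Finset.sum_range_sub', hD0, hDN, Finset.sum_const, Finset.card_range, nsmul_eq_mul, hN1]
    field_simp
    norm_num
  have hx := (Finset.sum_eq_sum_iff_of_le hlow).1 hsum x.1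
    (by rw [Finset.mem_range]; have := y.1.2; omega)
  rw [hx]
  have := at_kappa_le hpos hN x y h
  simp only [D]
  rw [h, hvx, hvy]
  exact this

end AT

/-- A symmetrical antitree `AT(a_1, …, a_N)` with `N` odd and `a_1 = 1`
(of diameter `L = N - 1`) is Bonnet-Myers sharp iff every radial edge has `κ_LLY = 2/L`. -/
theorem stmt11 (N : ℕ) (hN : Odd N) (a : Fin N → ℕ) (hpos : ∀ k, 0 < a k)
    (h1 : a ⟨0, hN.pos⟩ = 1) (hsym : ∀ k : Fin N, a k = a k.rev) :
    BMSharp (antitree N a) ↔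
      ∀ x y : Σ k : Fin N, Fin (a k), (antitree N a).Adj x y → x.1 ≠ y.1 →
        kappaLLY (antitree N a) x y = 2 / ((N : ℝ) - 1) := by
  by_cases hN1 : N = 1
  · subst hN1
    have hs : ∀ x y : Σ k : Fin 1, Fin (a k), x = y := fun x y =>
      at_eq h1 x y (Subsingleton.elim _ _) (Subsingleton.elim _ _)
    constructor
    · intro _ x y h
      exact absurd (hs x y) h.1
    · intro _
      have e1 : {r : ℝ | ∃ x y, (antitree 1 a).Adj x y ∧ r = kappaLLY (antitree 1 a) x y} = ∅ := by
        ext r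
        simp only [Set.mem_setOf_eq, Set.mem_empty_iff_false, iff_false]
        rintro ⟨x, y, h, -⟩
        exact h.1 (hs x y)
      have e2 : diam (antitree 1 a) = 0 := by
        apply Nat.eq_zero_of_le_zero
        apply Finset.sup_le
        rintro ⟨x, y⟩ -
        rw [hs x y]
        simp
      unfold BMSharp
      rw [e1, e2]
      simp
  have hN3 : 3 ≤ N := by obtain ⟨m, hm⟩ := hN; omega
  have hN2 : 2 ≤ N := by omega
  have h2 : a ⟨N - 1, by omega⟩ = 1 := by
    have := hsym ⟨0, hN.pos⟩
    rw [h1] at this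
    refine Eq.trans (congrArg a (Fin.ext ?_)) this.symm
    simp [Fin.val_rev]
  have hc : ((N - 1 : ℕ) : ℝ) = (N : ℝ) - 1 := by
    rw [Nat.cast_sub (by omega)]; simp
  unfold BMSharp
  rw [at_diam hpos hN2, hc]
  constructor
  · intro hB
    have hge : ∀ x y, (antitree N a).Adj x y →
        2 / ((N : ℝ) - 1) ≤ kappaLLY (antitree N a) x y := by
      intro x y h
      rw [← hB]
      apply csInf_le
      · apply Set.Finite.bddBelow
        apply (Set.finite_range (fun xy : (Σ k : Fin N, Fin (a k)) × (Σ k : Fin N, Fin (a k)) =>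
          kappaLLY (antitree N a) xy.1 xy.2)).subset
        rintro r ⟨x, y, -, rfl⟩
        exact ⟨(x, y), rfl⟩
      · exact ⟨x, y, h, rfl⟩
    intro x y h hne
    rcases h.2 with e | e | e
    · exact absurd (Fin.ext e) hne
    · exact at_main hpos hN2 h1 h2 hge x y e
    · rw [kappaLLY_symm]
      exact at_main hpos hN2 h1 h2 hge y x e
  · intro hr
    apply IsLeast.csInf_eq
    constructor
    · let x : Σ k : Fin N, Fin (a k) := ⟨⟨0, by omega⟩, ⟨0, hpos _⟩⟩
      let y : Σ k : Fin N, Fin (a k) := ⟨⟨1, by omega⟩, ⟨0, hpos _⟩⟩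
      have hne : x.1 ≠ y.1 := by simp [x, y]
      have hadj : (antitree N a).Adj x y :=
        ⟨fun e => hne (by rw [e]), Or.inr (Or.inl rfl)⟩
      exact ⟨x, y, hadj, (hr x y hadj hne).symm⟩
    · rintro r ⟨x, y, h, rfl⟩
      by_cases hxy : x.1 = y.1
      · have : 1 ≤ kappaLLY (antitree N a) x y := by
          apply le_kappaLLY_twin (at_connected hpos hN2) h
          intro z hzx hzy
          simp only [antitree, hxy]
          simp [hzx.symm, hzy.symm]
        refine le_trans ?_ this
        have : (3:ℝ) ≤ N := by exact_mod_cast hN3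
        rw [div_le_one (by linarith)]
        linarith
      · exact (hr x y h hxy).ge
end
end

section
/- Let a≥2 and b≥1 be integers, let G=G(a,b), and let p=1/(2a+b−1). Then W₁(μ_{u_1}^p, μ_{u_3}^p) = 1/(2a+b−1), where u_1 and u_3 are adjacent vertices of G of equal degree 2a+b−2. -/
open scoped Classical
open Finset

noncomputable section

theorem deg_aux (a b : ℕ) (x x' : Fin (2*a+b)) (hx : x ≠ x')
    (hadj : ∀ z, (Gab a b).Adj x z ↔ z ≠ x ∧ z ≠ x') : deg (Gab a b) x = 2*a+b-2 := by
  unfold deg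
  have : (Finset.univ.filter (fun y => (Gab a b).Adj x y)) = ({x, x'} : Finset _)ᶜ := by
    ext z
    simp [hadj]
  rw [this, Finset.card_compl, Finset.card_pair hx, Fintype.card_fin]

theorem mu_aux (a b : ℕ) (hab : 4 ≤ 2*a+b) (x x' : Fin (2*a+b)) (hx : x ≠ x')
    (hadj : ∀ z, (Gab a b).Adj x z ↔ z ≠ x ∧ z ≠ x') (z : Fin (2*a+b)) :
    mu (Gab a b) (1 / ((2*a+b : ℝ) - 1)) x z
      = if z = x' then 0 else 1 / ((2*a+b : ℝ) - 1) := by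
  have hR : (4:ℝ) ≤ 2*a+b := by exact_mod_cast hab
  unfold mu
  rw [deg_aux a b x x' hx hadj, hadj, Nat.cast_sub (by omega)]
  push_cast
  by_cases h1 : z = x
  · subst h1
    simp [hx]
  · by_cases h2 : z = x'
    · simp [h2, Ne.symm hx]
    · simp only [h1, h2, if_false, ne_eq, not_false_eq_true, and_self, if_true]
      have h3 : (2*a+b:ℝ) - 1 ≠ 0 := by linarith
      have h4 : (2*a+b:ℝ) - 2 ≠ 0 := by linarith
      field_simp
      ring

theorem W1_aux {V : Type*} [Fintype V] [DecidableEq V] (G : SimpleGraph V) (q : ℝ) (hq : 0 ≤ q) (hq1 : q ≤ 1)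
    (s t : V) (hst : G.Adj s t) (hd : ∀ y, y ≠ t → G.Reachable t y) (m₁ m₂ : V → ℝ)
    (h₁ : ∀ z, m₁ z = if z = s then 0 else q) (h₂ : ∀ z, m₂ z = if z = t then 0 else q) :
    W1 G m₁ m₂ = q := by
  have hne : s ≠ t := hst.ne
  unfold W1
  apply IsLeast.csInf_eq
  constructor
  · refine ⟨fun x y => if y = Equiv.swap s t x then m₁ x else 0, ?_, ?_, ?_, ?_⟩
    · intro x y
      simp only [h₁]
      split_ifs <;> constructor <;> linarith
    · intro x
      simp
    · intro y
      have : ∀ x, (y = Equiv.swap s t x) ↔ (x = Equiv.swap s t y) := by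
        intro x
        rw [eq_comm, Equiv.swap_apply_eq_iff]
      simp only [this]
      simp only [Finset.sum_ite_eq', Finset.mem_univ, if_true, Finset.sum_ite_eq]
      rw [h₁, h₂]
      congr 1
      rw [eq_iff_iff, Equiv.swap_apply_eq_iff, Equiv.swap_apply_left]
    · simp only [mul_ite, mul_zero, Finset.sum_ite_eq', Finset.sum_ite_eq, Finset.mem_univ, if_true]
      rw [Finset.sum_eq_single t]
      · rw [Equiv.swap_apply_right, h₁, if_neg hne.symm, SimpleGraph.dist_eq_one_iff_adj.2 hst.symm]
        simp
      · intro x _ hx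
        by_cases hxs : x = s
        · simp [h₁, hxs]
        · rw [Equiv.swap_apply_of_ne_of_ne hxs hx]
          simp
      · simp
  · rintro c ⟨π, h0, hr, hc, rfl⟩
    have htt : π t t = 0 := by
      have h := hc t
      rw [h₂, if_pos rfl, Finset.sum_eq_zero_iff_of_nonneg (fun x _ => (h0 x t).1)] at h
      exact h t (Finset.mem_univ _)
    calc q = ∑ y, π t y := by rw [hr, h₁, if_neg hne.symm]
      _ ≤ ∑ y, (G.dist t y : ℝ) * π t y := by
        apply Finset.sum_le_sum
        intro y _
        by_cases hy : y = t
        · simp [hy, htt]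
        · have h1 : 0 < G.dist t y := (hd y hy).pos_dist_of_ne (Ne.symm hy)
          have h2 : (1:ℝ) ≤ G.dist t y := by exact_mod_cast h1
          nlinarith [(h0 t y).1]
      _ ≤ _ := Finset.single_le_sum (f := fun x => ∑ y, (G.dist x y : ℝ) * π x y)
          (fun x _ => Finset.sum_nonneg fun y _ => mul_nonneg (Nat.cast_nonneg _) (h0 x y).1)
          (Finset.mem_univ t)

/-- In `G(a,b)` with `a ≥ 2`, `b ≥ 1`, the vertices `u_1` and `u_3` are adjacent
of equal degree `2a+b-2`, and for `p = 1/(2a+b-1)` we have `W₁(μ_{u_1}^p, μ_{u_3}^p) =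
1/(2a+b-1)`. -/
theorem stmt18 (a b : ℕ) (ha : 2 ≤ a) (hb : 1 ≤ b) :
    (Gab a b).Adj ⟨0, by omega⟩ ⟨2, by omega⟩ ∧
    deg (Gab a b) ⟨0, by omega⟩ = 2*a + b - 2 ∧
    deg (Gab a b) ⟨2, by omega⟩ = 2*a + b - 2 ∧
    W1 (Gab a b) (mu (Gab a b) (1 / ((2*a+b : ℝ) - 1)) ⟨0, by omega⟩)
        (mu (Gab a b) (1 / ((2*a+b : ℝ) - 1)) ⟨2, by omega⟩)
      = 1 / ((2*a+b : ℝ) - 1) := by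
  have hadj0 : ∀ z, (Gab a b).Adj ⟨0, by omega⟩ z ↔
      z ≠ (⟨0, by omega⟩ : Fin (2*a+b)) ∧ z ≠ (⟨1, by omega⟩ : Fin (2*a+b)) := by
    intro z
    simp only [Gab, ne_eq, Fin.ext_iff]
    omega
  have hadj2 : ∀ z, (Gab a b).Adj ⟨2, by omega⟩ z ↔
      z ≠ (⟨2, by omega⟩ : Fin (2*a+b)) ∧ z ≠ (⟨3, by omega⟩ : Fin (2*a+b)) := by
    intro z
    simp only [Gab, ne_eq, Fin.ext_iff]
    omega
  have hadj3 : ∀ z, (Gab a b).Adj ⟨3, by omega⟩ z ↔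
      z ≠ (⟨2, by omega⟩ : Fin (2*a+b)) ∧ z ≠ (⟨3, by omega⟩ : Fin (2*a+b)) := by
    intro z
    simp only [Gab, ne_eq, Fin.ext_iff]
    omega
  have hR : (4:ℝ) ≤ 2*a+b := by exact_mod_cast (by omega : 4 ≤ 2*a+b)
  refine ⟨?_, ?_, ?_, ?_⟩
  · rw [hadj0]; simp
  · exact deg_aux a b _ _ (by simp) hadj0
  · exact deg_aux a b _ _ (by simp) hadj2
  · refine W1_aux (Gab a b) _ ?_ ?_ ⟨1, by omega⟩ ⟨3, by omega⟩ ?_ ?_ _ _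
      (mu_aux a b (by omega) _ _ (by simp) hadj0) (mu_aux a b (by omega) _ _ (by simp) hadj2)
    · apply div_nonneg <;> linarith
    · rw [div_le_one] <;> linarith
    · rw [SimpleGraph.adj_comm, hadj3]; simp
    · intro y hy
      by_cases h2 : y = ⟨2, by omega⟩
      · subst h2
        have e1 : (Gab a b).Adj ⟨3, by omega⟩ ⟨0, by omega⟩ := by rw [hadj3]; simp
        have e2 : (Gab a b).Adj ⟨0, by omega⟩ ⟨2, by omega⟩ := by rw [hadj0]; simp
        exact e1.reachable.trans e2.reachable
      · exact ((hadj3 y).2 ⟨h2, hy⟩).reachable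
end
end
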